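/- arXiv:math/0209190 — 6 statements merged into one kernel-verified Lean document; each statement's English description precedes it below -/
import Mathlib

section
/- For all real numbers t₁ < t₂ one has arccos(tanh t₂) > (1 − (t₂ − t₁)) · arccos(tanh t₁). -/
theorem tanh_hasDeriv_aux (t : ℝ) :
    HasDerivAt Real.tanh (1 - Real.tanh t ^ 2) t := by
  have hc : Real.cosh t ≠ 0 := (Real.cosh_pos t).ne'
  have h := (Real.hasDerivAt_sinh t).div (Real.hasDerivAt_cosh t) hc
  have e : Real.tanh = Real.sinh / Real.cosh := by
    funext x
    simp [Real.tanh_eq_sinh_div_cosh]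
  rw [e]
  refine h.congr_deriv ?_
  simp only [Pi.div_apply]
  field_simp

theorem tanh_sq_lt_aux (t : ℝ) : 0 < 1 - Real.tanh t ^ 2 := by
  have hc := Real.cosh_pos t
  have h := Real.cosh_sq t
  rw [Real.tanh_eq_sinh_div_cosh, div_pow, sub_pos, div_lt_one (by positivity)]
  linarith

theorem arccos_tanh_hasDeriv_aux (t : ℝ) :
    HasDerivAt (fun s => Real.arccos (Real.tanh s))
      (-Real.sin (Real.arccos (Real.tanh t))) t := by
  have hp := tanh_sq_lt_aux t
  have h1 : Real.tanh t ≠ -1 := by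
    intro h
    rw [h] at hp
    norm_num at hp
  have h2 : Real.tanh t ≠ 1 := by
    intro h
    rw [h] at hp
    norm_num at hp
  have h := (Real.hasDerivAt_arccos h1 h2).comp t (tanh_hasDeriv_aux t)
  refine h.congr_deriv ?_
  rw [Real.sin_arccos]
  have hs := Real.sqrt_pos.2 hp
  have hq := Real.sq_sqrt hp.le
  field_simp
  linarith

theorem arccos_tanh_pos_aux (t : ℝ) : 0 < Real.arccos (Real.tanh t) := by
  have hp := tanh_sq_lt_aux t
  rw [Real.arccos_pos]
  nlinarith

theorem stmt1 (t₁ t₂ : ℝ) (h : t₁ < t₂) :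
    Real.arccos (Real.tanh t₂) > (1 - (t₂ - t₁)) * Real.arccos (Real.tanh t₁) := by
  have hd : ∀ t, HasDerivAt (fun s => Real.exp s * Real.arccos (Real.tanh s)) _ t :=
    fun t => (Real.hasDerivAt_exp t).mul (arccos_tanh_hasDeriv_aux t)
  have hm : StrictMono (fun s => Real.exp s * Real.arccos (Real.tanh s)) := by
    apply strictMono_of_deriv_pos
    intro t
    rw [(hd t).deriv]
    have h1 := Real.sin_lt (arccos_tanh_pos_aux t)
    have h2 := Real.exp_pos t
    nlinarith
  have h3 := hm h
  simp only at h3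
  have h4 : Real.exp t₁ = Real.exp t₂ * Real.exp (-(t₂ - t₁)) := by
    rw [← Real.exp_add]
    congr 1
    ring
  rw [h4, mul_assoc] at h3
  have h5 := lt_of_mul_lt_mul_left h3 (Real.exp_pos t₂).le
  have h6 := Real.add_one_le_exp (-(t₂ - t₁))
  have h7 := arccos_tanh_pos_aux t₁
  nlinarith
end

section
/- Let k ∈ ℕ and let φ, ε : ℕ → ℝ be sequences with φ i ≥ 0 and ε i ≥ 0 for all i, and with ∑_{i=1}^{k} ε i ≤ 1. Let v : ℕ → ℝ satisfy v 0 ≥ φ 0 and, for every r with 1 ≤ r ≤ k, v r ≥ φ r + (1 − ε r) · v (r−1). Then v k ≥ (1 − ∑_{i=1}^{k} ε i) · (∑_{i=0}^{k} φ i). -/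
theorem stmt2 (k : ℕ) (φ ε v : ℕ → ℝ)
    (hφ : ∀ i, 0 ≤ φ i) (hε : ∀ i, 0 ≤ ε i)
    (hεsum : ∑ i ∈ Finset.Icc 1 k, ε i ≤ 1)
    (hv0 : v 0 ≥ φ 0)
    (hrec : ∀ r, 1 ≤ r → r ≤ k → v r ≥ φ r + (1 - ε r) * v (r - 1)) :
    v k ≥ (1 - ∑ i ∈ Finset.Icc 1 k, ε i) * ∑ i ∈ Finset.range (k + 1), φ i := by
  induction k with
  | zero => simpa using hv0
  | succ k ih =>
    rw [Finset.sum_Icc_succ_top (by omega)] at hεsum ⊢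
    rw [Finset.sum_range_succ _ (k + 1)]
    have hE : 0 ≤ ∑ i ∈ Finset.Icc 1 k, ε i := Finset.sum_nonneg fun i _ => hε i
    have hP : 0 ≤ ∑ i ∈ Finset.range (k + 1), φ i := Finset.sum_nonneg fun i _ => hφ i
    have he := hε (k + 1)
    have hf := hφ (k + 1)
    have h1 := ih (by linarith) (fun r h h' => hrec r h (by omega))
    have h2 := hrec (k + 1) (by omega) le_rfl
    rw [Nat.add_sub_cancel] at h2
    generalize ∑ i ∈ Finset.Icc 1 k, ε i = E at *
    generalize ∑ i ∈ Finset.range (k + 1), φ i = P at *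
    have h3 : (1 - ε (k + 1)) * ((1 - E) * P) ≤ (1 - ε (k + 1)) * v k :=
      mul_le_mul_of_nonneg_left h1 (by linarith)
    have h4 : 0 ≤ ε (k + 1) * E * P := by positivity
    have h5 : 0 ≤ (E + ε (k + 1)) * φ (k + 1) := by positivity
    nlinarith
end

section
/- Let L > 0 and let v : ℝ → ℝ be differentiable on [0, L] with 0 ≤ v t ≤ π/2 for all t ∈ [0, L], and suppose deriv v t ≤ −sin (v t) for all t ∈ [0, L]. Then v L ≤ 2 · v 0 / (2 + L). -/
theorem stmt4 (L : ℝ) (hL : 0 < L) (v : ℝ → ℝ)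
    (hdiff : ∀ t ∈ Set.Icc (0 : ℝ) L, DifferentiableAt ℝ v t)
    (hrange : ∀ t ∈ Set.Icc (0 : ℝ) L, 0 ≤ v t ∧ v t ≤ Real.pi / 2)
    (hderiv : ∀ t ∈ Set.Icc (0 : ℝ) L, deriv v t ≤ -Real.sin (v t)) :
    v L ≤ 2 * v 0 / (2 + L) := by
  have hs : ∀ t ∈ Set.Icc (0 : ℝ) L, deriv v t ≤ -(v t / 2) := by
    intro t ht
    obtain ⟨h0, h1⟩ := hrange t ht
    have h2 := Real.mul_le_sin h0 h1
    have h3 : (1 : ℝ) / 2 ≤ 2 / Real.pi := by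
      rw [div_le_div_iff₀ (by norm_num) Real.pi_pos]
      linarith [Real.pi_le_four]
    have h4 := mul_le_mul_of_nonneg_right h3 h0
    linarith [hderiv t ht]
  have hc : ContinuousOn v (Set.Icc 0 L) :=
    fun t ht => (hdiff t ht).continuousAt.continuousWithinAt
  have hanti : AntitoneOn v (Set.Icc 0 L) := by
    apply antitoneOn_of_deriv_nonpos (convex_Icc 0 L) hc
    · intro t ht
      exact (hdiff t (interior_subset ht)).differentiableWithinAt
    · intro t ht
      linarith [hs t (interior_subset ht), (hrange t (interior_subset ht)).1]
  obtain ⟨c, hcm, hce⟩ := exists_deriv_eq_slope v hL hc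
    (fun t ht => (hdiff t (Set.Ioo_subset_Icc_self ht)).differentiableWithinAt)
  have hcI := Set.Ioo_subset_Icc_self hcm
  have h1 := hanti hcI (Set.right_mem_Icc.2 hL.le) hcI.2
  have h2 := hs c hcI
  rw [hce, sub_zero, div_le_iff₀ hL] at h2
  rw [le_div_iff₀ (by linarith)]
  nlinarith [mul_le_mul_of_nonneg_right h1 hL.le]
end

section
/- Fix a, b > 0. Then there exist constants C > 0 and θ₀ > 0 such that for every θ ∈ (0, θ₀] and all real numbers lα > 0, lβ > 0, d ≥ 0 satisfying cos(a·θ/2) = cosh(lβ/2) · tanh(lα/2), cos(b·θ/2) = cosh(lα/2) · tanh(lβ/2), and cosh d · sinh(lα/2) · sinh(lβ/2) = 1, one has d ≤ C · θ. -/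
theorem stmt5 (a b : ℝ) (ha : 0 < a) (hb : 0 < b) :
    ∃ C > (0 : ℝ), ∃ θ₀ > (0 : ℝ), ∀ θ ∈ Set.Ioc (0 : ℝ) θ₀,
      ∀ lα lβ d : ℝ, 0 < lα → 0 < lβ → 0 ≤ d →
        Real.cos (a * θ / 2) = Real.cosh (lβ / 2) * Real.tanh (lα / 2) →
        Real.cos (b * θ / 2) = Real.cosh (lα / 2) * Real.tanh (lβ / 2) →
        Real.cosh d * Real.sinh (lα / 2) * Real.sinh (lβ / 2) = 1 →
        d ≤ C * θ := by
  refine ⟨a + b, by positivity, 1 / (a + b), by positivity, ?_⟩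
  rintro θ ⟨hθ, hθ1⟩ lα lβ d hα hβ hd h1 h2 h3
  rw [le_div_iff₀ (by positivity)] at hθ1
  have hcc : Real.cos (a * θ / 2) * Real.cos (b * θ / 2)
      = Real.sinh (lα / 2) * Real.sinh (lβ / 2) := by
    rw [h1, h2, Real.tanh_eq_sinh_div_cosh, Real.tanh_eq_sinh_div_cosh]
    have := (Real.cosh_pos (lα / 2)).ne'
    have := (Real.cosh_pos (lβ / 2)).ne'
    field_simp
  rw [mul_assoc, ← hcc] at h3
  have hch : 1 + d ^ 2 / 2 ≤ Real.cosh d := by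
    have e : Real.cosh d = Real.cosh (d / 2) ^ 2 + Real.sinh (d / 2) ^ 2 := by
      rw [← Real.cosh_two_mul]; congr 1; ring
    have e2 := Real.cosh_sq (d / 2)
    have e3 : d / 2 ≤ Real.sinh (d / 2) := Real.self_le_sinh_iff.2 (by positivity)
    nlinarith
  have hA := Real.one_sub_sq_div_two_le_cos (x := a * θ / 2)
  have hB := Real.one_sub_sq_div_two_le_cos (x := b * θ / 2)
  generalize Real.cos (a * θ / 2) = u at *
  generalize Real.cos (b * θ / 2) = v at *
  have hu : 0 < a * θ := by positivity
  have hv : 0 < b * θ := by positivity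
  have hs : a * θ + b * θ ≤ 1 := by linarith
  have goal' : (a + b) * θ = a * θ + b * θ := by ring
  rw [goal']
  generalize a * θ = p at *
  generalize b * θ = q at *
  have hp2 : p ^ 2 ≤ 1 := by nlinarith
  have hq2 : q ^ 2 ≤ 1 := by nlinarith
  have huv : (1 - (p / 2) ^ 2 / 2) * (1 - (q / 2) ^ 2 / 2) ≤ u * v :=
    mul_le_mul hA hB (by nlinarith) (by nlinarith)
  have h4 : 1 - (p + q) ^ 2 / 8 ≤ u * v := by
    nlinarith [mul_pos hu hv, sq_nonneg (p * q)]
  have h5 : (p + q) ^ 2 ≤ 1 := by nlinarith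
  have h6 : (1 + d ^ 2 / 2) * (1 - (p + q) ^ 2 / 8) ≤ 1 := by
    refine le_trans ?_ h3.le
    exact mul_le_mul hch h4 (by nlinarith) (Real.cosh_pos d).le
  have h7 : d ^ 2 ≤ (p + q) ^ 2 := by
    nlinarith [mul_nonneg (sq_nonneg d) (sub_nonneg.2 h5)]
  exact (pow_le_pow_iff_left₀ hd (by positivity) two_ne_zero).1 h7
end

section
/- There exists a constant C > 0 such that for every ε ∈ (0, 1/2] and all real numbers x > 0, h ≥ 0, φ ∈ [0, π/2] with h ≤ ε, tanh x ≤ sinh h, and sin φ · sinh x = sinh h, one has φ ≥ π/2 − C · ε. -/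
theorem stmt9 :
    ∃ C > (0 : ℝ), ∀ ε ∈ Set.Ioc (0 : ℝ) (1 / 2), ∀ x h φ : ℝ,
      0 < x → 0 ≤ h → φ ∈ Set.Icc (0 : ℝ) (Real.pi / 2) → h ≤ ε →
      Real.tanh x ≤ Real.sinh h → Real.sin φ * Real.sinh x = Real.sinh h →
      φ ≥ Real.pi / 2 - C * ε := by
  refine ⟨Real.pi, Real.pi_pos, ?_⟩
  rintro ε ⟨hε0, hε⟩ x h φ hx hh ⟨hφ0, hφ1⟩ hhε ht hs
  have hS : 0 < Real.sinh x := Real.sinh_pos_iff.2 hx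
  have hc : 0 < Real.cosh x := Real.cosh_pos x
  have hsc : 1 ≤ Real.sin φ * Real.cosh x := by
    have h1 := ht
    rw [Real.tanh_eq_sinh_div_cosh, ← hs, div_le_iff₀ hc] at h1
    by_contra hcon
    push Not at hcon
    nlinarith
  have hcos : Real.cos φ * Real.cosh x ≤ Real.sinh x := by
    refine (abs_le_of_sq_le_sq' ?_ hS.le).2
    have e1 := Real.cosh_sq x
    have e2 := Real.sin_sq_add_cos_sq φ
    have e3 : (Real.sin φ) ^ 2 * Real.cosh x ^ 2 = (1 - Real.cos φ ^ 2) * Real.cosh x ^ 2 := by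
      rw [← e2]; ring
    nlinarith
  have hcosH : Real.cos φ ≤ Real.sinh h := by
    refine le_trans ?_ ht
    rw [Real.tanh_eq_sinh_div_cosh, le_div_iff₀ hc]
    exact hcos
  have hH : Real.sinh h ≤ 2 * h := by
    rw [Real.sinh_eq]
    have e1 := Real.add_one_le_exp (-h)
    have e2 : Real.exp h * Real.exp (-h) = 1 := by rw [← Real.exp_add]; simp
    have e3 := Real.exp_pos h
    have e4 : Real.exp h * (1 - h) ≤ 1 := by nlinarith
    have e5 : Real.exp h ≤ 1 + 2 * h := by
      by_contra hcon
      push Not at hcon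
      nlinarith
    linarith
  have hj := Real.mul_le_sin (x := Real.pi / 2 - φ) (by linarith) (by linarith)
  rw [Real.sin_pi_div_two_sub] at hj
  have hp := Real.pi_pos
  have : 2 / Real.pi * (Real.pi / 2 - φ) ≤ 2 * ε := by linarith
  rw [div_mul_eq_mul_div, div_le_iff₀ hp] at this
  linarith
end

section
/- There exists a constant C > 0 such that for all ε ∈ (0, 1/4], θ ∈ (0, π/2], ψ ∈ [π/2 − ε, π/2], and φ ∈ [0, π) satisfying tan(φ/2) = tan(θ/2) · sin ψ, one has φ ≥ (1 − C · ε) · θ. -/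
theorem stmt11 :
    ∃ C > (0 : ℝ), ∀ ε ∈ Set.Ioc (0 : ℝ) (1 / 4), ∀ θ ∈ Set.Ioc (0 : ℝ) (Real.pi / 2),
      ∀ ψ ∈ Set.Icc (Real.pi / 2 - ε) (Real.pi / 2), ∀ φ ∈ Set.Ico (0 : ℝ) Real.pi,
        Real.tan (φ / 2) = Real.tan (θ / 2) * Real.sin ψ →
        φ ≥ (1 - C * ε) * θ := by
  refine ⟨2, by norm_num, ?_⟩
  rintro ε ⟨he0, he1⟩ θ ⟨ht0, ht1⟩ ψ ⟨hp0, hp1⟩ φ ⟨hf0, hf1⟩ h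
  have hpi := Real.pi_pos
  have hpi4 := Real.pi_le_four
  have het : 0 < ε * θ := mul_pos he0 ht0
  by_cases hle : θ ≤ φ
  · nlinarith
  push Not at hle
  have hs : 1 - ε ≤ Real.sin ψ := by
    have h1 := Real.one_sub_sq_div_two_le_cos (x := Real.pi / 2 - ψ)
    rw [Real.cos_pi_div_two_sub] at h1
    nlinarith
  have hs1 := Real.sin_le_one ψ
  have hca : 0 < Real.cos (θ / 2) := Real.cos_pos_of_mem_Ioo ⟨by linarith, by linarith⟩
  have hcb : 0 < Real.cos (φ / 2) := Real.cos_pos_of_mem_Ioo ⟨by linarith, by linarith⟩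
  have hsa : 0 ≤ Real.sin (θ / 2) := Real.sin_nonneg_of_nonneg_of_le_pi (by linarith) (by linarith)
  have hsa' : Real.sin (θ / 2) ≤ θ / 2 := Real.sin_le (by linarith)
  rw [Real.tan_eq_sin_div_cos, Real.tan_eq_sin_div_cos] at h
  field_simp at h
  have hd : Real.sin (θ / 2 - φ / 2)
      = Real.sin (θ / 2) * Real.cos (φ / 2) * (1 - Real.sin ψ) := by
    rw [Real.sin_sub]; linarith
  have hj := Real.mul_le_sin (x := θ / 2 - φ / 2) (by linarith) (by linarith)
  have h1 : Real.sin (θ / 2) * Real.cos (φ / 2) ≤ θ / 2 := by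
    nlinarith [Real.cos_le_one (φ / 2)]
  have h2 : Real.sin (θ / 2) * Real.cos (φ / 2) * (1 - Real.sin ψ) ≤ θ / 2 * ε :=
    mul_le_mul h1 (by linarith) (by linarith) (by linarith)
  have h3 : (1 / 2 : ℝ) ≤ 2 / Real.pi := by
    rw [div_le_div_iff₀ (by norm_num) hpi]; linarith
  have h4 : 1 / 2 * (θ / 2 - φ / 2) ≤ 2 / Real.pi * (θ / 2 - φ / 2) :=
    mul_le_mul_of_nonneg_right h3 (by linarith)
  linarith
end
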